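/- The double series ∑_{m,n≥0, m≡n (mod 3)} 1/((n+1/2)(m+n+1)²) converges and equals (7/54) ζ(3) + (5π/(3√3)) L(2, χ₃), where χ₃ is the nontrivial Dirichlet character modulo 3. -/

import Mathlib

open scoped BigOperators Real

/-- The nontrivial (quadratic) Dirichlet character of conductor 3 (real-valued). -/
noncomputable def chi3 (n : ℕ) : ℝ :=
  if n % 3 = 1 then 1 else if n % 3 = 2 then -1 else 0

/-!
Adding the terms at `(m, n)` and `(n, m)` turns the series into half of the Tornheim series
`∑ 1 / (u v (u + v))` over pairs of positive half-integers `u = m + 1 / 2`, `v = n + 1 / 2` that are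
congruent modulo `N = 3`. Letting `v` run over all half-integers does not change the sum: the terms
with `v < 0` are antisymmetric under `(u, v) ↦ (-v, -u)`, and the terms with `u + v = 0` are `0` by
convention. The sum over the full progression `v ∈ u + N ℤ` is now given by the partial fractions of
the cotangent and `cot x - cot 2x = 1 / sin 2x`: it is `π / (N u² sin (2 π u / N))`, or `1 / u³` if
`N` divides `2 u`. For `N = 3` the sine is `√3 / 2` times `χ₃ (2 u)`, and what remains are sums of
`1 / k³` and `χ₃ k / k²` over odd `k = 2 u`.
-/

theorem hasSum_int_of_hasSum_add_neg {G : Type*} [AddCommGroup G] [TopologicalSpace G]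
    [IsTopologicalAddGroup G] [T2Space G] {f : ℤ → G} {s : G} (hf : Summable f)
    (hs : HasSum (fun n : ℕ ↦ f (n + 1) + f (-(n + 1))) (s - f 0)) : HasSum f s := by
  have hsum := hs.unique (by simpa using (hasSum_nat_add_iff' 1).mpr hf.hasSum.nat_add_neg)
  rw [sub_left_inj] at hsum
  exact hsum ▸ hf.hasSum

theorem hasSum_half_of_hasSum_add_swap {α : Type*} {f : α × α → ℝ} {s : ℝ} (hf : ∀ p, 0 ≤ f p)
    (hs : HasSum (fun p : α × α ↦ f p + f p.swap) s) : HasSum f (s / 2) := by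
  have hsummable : Summable f :=
    .of_nonneg_of_le hf (fun p ↦ le_add_of_nonneg_right (hf p.swap)) hs.summable
  have hswap : HasSum (fun p : α × α ↦ f p.swap) (∑' p, f p) :=
    (Equiv.prodComm α α).hasSum_iff.mpr hsummable.hasSum
  convert hsummable.hasSum using 1
  linarith [hs.unique (hsummable.hasSum.add hswap)]

theorem hasSum_nat_nat_of_antisymm {E : Type*} [AddCommGroup E] [UniformSpace E]
    [IsUniformAddGroup E] [CompleteSpace E] [T2Space E] [IsAddTorsionFree E] {f : ℕ × ℤ → E} {s : E}
    (hf : HasSum f s) (hanti : ∀ m n : ℕ, f (n, -(m + 1)) = -f (m, -(n + 1))) :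
    HasSum (fun p : ℕ × ℕ ↦ f (p.1, p.2)) s := by
  have hnonneg : Summable fun p : ℕ × ℕ ↦ f (p.1, p.2) :=
    hf.summable.comp_injective (i := fun p : ℕ × ℕ ↦ (p.1, (p.2 : ℤ)))
      (Function.injective_id.prodMap Nat.cast_injective)
  have hneg : Summable fun p : ℕ × ℕ ↦ f (p.1, -(p.2 + 1)) :=
    hf.summable.comp_injective (i := fun p : ℕ × ℕ ↦ (p.1, -((p.2 : ℤ) + 1)))
      (Function.injective_id.prodMap fun a b h ↦ by simpa using h)
  have hneg_zero : ∑' p : ℕ × ℕ, f (p.1, -(p.2 + 1)) = 0 := by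
    rw [← self_eq_neg, ← tsum_neg, ← (Equiv.prodComm ℕ ℕ).tsum_eq]
    exact tsum_congr fun p ↦ hanti p.1 p.2
  have hsplit : ∑' p : ℕ × ℕ, (f (p.1, p.2) + f (p.1, -(p.2 + 1))) = s := calc
    _ = ∑' (n : ℕ) (m : ℕ), (f (n, m) + f (n, -(m + 1))) := (hnonneg.add hneg).tsum_prod
    _ = ∑' (n : ℕ) (m : ℤ), f (n, m) :=
      tsum_congr fun n ↦ tsum_nat_add_neg_add_one (hf.summable.prod_factor n)
    _ = s := by rw [← hf.summable.tsum_prod, hf.tsum_eq]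
  rw [hnonneg.tsum_add hneg, hneg_zero, add_zero] at hsplit
  exact hsplit ▸ hnonneg.hasSum

theorem hasSum_odd_of_map_two_mul {R : Type*} [NormedRing R] [CompleteSpace R] {f : ℕ → R} {c s : R}
    (hf : HasSum f s) (hmul : ∀ n, f (2 * n) = c * f n) :
    HasSum (fun n ↦ f (2 * n + 1)) ((1 - c) * s) := by
  have hodd : Summable fun n ↦ f (2 * n + 1) :=
    hf.summable.comp_injective fun a b h ↦ by simpa using h
  have heven : HasSum (fun n ↦ f (2 * n)) (c * s) := by simpa only [hmul] using hf.mul_left c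
  rw [sub_mul, one_mul, sub_eq_of_eq_add' (hf.unique (heven.even_add_odd hodd.hasSum))]
  exact hodd.hasSum

theorem hasSum_ite_dvd_iff {M : Type*} [AddCommMonoid M] [TopologicalSpace M] {f : ℕ → M} {s : M}
    {d : ℕ} (hd : d ≠ 0) :
    HasSum (fun n ↦ if d ∣ n then f n else 0) s ↔ HasSum (fun n ↦ f (d * n)) s := by
  rw [← (mul_right_injective₀ hd).hasSum_iff]
  · simp [Function.comp_def]
  · exact fun n hn ↦ if_neg fun ⟨k, hk⟩ ↦ hn ⟨k, hk.symm⟩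

section Cotangent

variable {x y : ℝ}

theorem add_intCast_ne_zero (hx : x ∉ Set.range ((↑) : ℤ → ℝ)) (k : ℤ) : x + k ≠ 0 :=
  fun h ↦ hx ⟨-k, by push_cast; linarith⟩

theorem hasSum_one_div_sub_add_one_div_add (hx : x ∉ Set.range ((↑) : ℤ → ℝ)) :
    HasSum (fun n : ℕ ↦ 1 / (x - (n + 1)) + 1 / (x + (n + 1))) (π * Real.cot (π * x) - 1 / x) := by
  have hz : (x : ℂ) ∈ Complex.integerComplement := by
    rintro ⟨k, hk⟩
    exact hx ⟨k, by exact_mod_cast hk⟩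
  rw [← Complex.hasSum_ofReal]
  push_cast
  rw [cot_series_rep' hz]
  exact (summable_cotTerm hz).hasSum

theorem summable_int_one_div_add_mul_add (x y : ℝ) :
    Summable fun k : ℤ ↦ 1 / ((x + k) * (y + k)) := by
  have hsq (z : ℝ) : Summable fun k : ℤ ↦ ((z + k)⁻¹) ^ 2 := by
    simpa [add_comm] using (Real.summable_one_div_int_add_rpow z 2).mpr one_lt_two
  refine .of_norm_bounded ((hsq x).add (hsq y)) fun k ↦ ?_
  rw [one_div, mul_inv, Real.norm_eq_abs, abs_le]
  constructor <;> nlinarith [sq_nonneg ((x + k)⁻¹ + (y + k)⁻¹), sq_nonneg ((x + k)⁻¹ - (y + k)⁻¹)]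

theorem hasSum_int_one_div_add_mul_add (hx : x ∉ Set.range ((↑) : ℤ → ℝ))
    (hy : y ∉ Set.range ((↑) : ℤ → ℝ)) (hxy : x ≠ y) :
    HasSum (fun k : ℤ ↦ 1 / ((x + k) * (y + k)))
      ((π * Real.cot (π * x) - π * Real.cot (π * y)) / (y - x)) := by
  have hyx : y - x ≠ 0 := sub_ne_zero.mpr hxy.symm
  have hx0 := add_intCast_ne_zero hx
  have hy0 := add_intCast_ne_zero hy
  have hpair (k : ℤ) : 1 / ((x + k) * (y + k)) = (1 / (x + k) - 1 / (y + k)) / (y - x) := by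
    have hxk := hx0 k
    have hyk := hy0 k
    field_simp
    ring
  refine hasSum_int_of_hasSum_add_neg (summable_int_one_div_add_mul_add x y) ?_
  convert! ((hasSum_one_div_sub_add_one_div_add hx).sub
    (hasSum_one_div_sub_add_one_div_add hy)).div_const (y - x) using 1
  · ext n
    rw [hpair, hpair]
    push_cast
    ring
  · rw [hpair, Int.cast_zero]
    ring

/-- The summand at `k = 0` is `1 / 0 = 0`. -/
theorem hasSum_int_one_div_add_mul (hx : x ∉ Set.range ((↑) : ℤ → ℝ)) :
    HasSum (fun k : ℤ ↦ 1 / ((x + k) * k)) (1 / x ^ 2 - π * Real.cot (π * x) / x) := by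
  have hsum : Summable fun k : ℤ ↦ 1 / ((x + k) * k) := by
    simpa using summable_int_one_div_add_mul_add x 0
  have hx0 : x ≠ 0 := by simpa using add_intCast_ne_zero hx 0
  refine hasSum_int_of_hasSum_add_neg hsum ?_
  convert! (hasSum_one_div_sub_add_one_div_add hx).div_const (-x) using 1
  · ext n
    have hpos : x + (n + 1) ≠ 0 := mod_cast add_intCast_ne_zero hx (n + 1)
    have hneg : x - (n + 1) ≠ 0 := by simpa [sub_eq_add_neg] using add_intCast_ne_zero hx (-(n + 1))
    have hn : (n : ℝ) + 1 ≠ 0 := by positivity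
    push_cast
    rw [← sub_eq_add_neg x]
    field_simp
    ring
  · rw [Int.cast_zero, mul_zero, div_zero]
    field_simp
    ring

theorem cot_sub_cot_two_mul (hx : Real.sin (2 * x) ≠ 0) :
    Real.cot x - Real.cot (2 * x) = 1 / Real.sin (2 * x) := by
  have hsin : Real.sin x ≠ 0 := fun h ↦ hx (by simp [Real.sin_two_mul, h])
  rw [Real.cot_eq_cos_div_sin, Real.cot_eq_cos_div_sin, div_sub_div _ _ hsin hx,
    div_eq_div_iff (mul_ne_zero hsin hx) hx, Real.sin_two_mul, Real.cos_two_mul]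
  ring

theorem hasSum_int_one_div_add_mul_two_mul_add (hx : 2 * x ∉ Set.range ((↑) : ℤ → ℝ)) :
    HasSum (fun k : ℤ ↦ 1 / ((x + k) * (2 * x + k))) (π / (x * Real.sin (2 * π * x))) := by
  have hx' : x ∉ Set.range ((↑) : ℤ → ℝ) := by
    rintro ⟨k, rfl⟩
    exact hx ⟨2 * k, by push_cast; rfl⟩
  have hx0 : x ≠ 0 := by simpa using add_intCast_ne_zero hx' 0
  have hsin : Real.sin (2 * (π * x)) ≠ 0 := by
    rw [Ne, Real.sin_eq_zero_iff]
    rintro ⟨k, hk⟩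
    exact hx ⟨k, mul_right_cancel₀ Real.pi_ne_zero (by linarith)⟩
  convert hasSum_int_one_div_add_mul_add hx' hx (by grind) using 1
  rw [← mul_sub, mul_left_comm π 2, cot_sub_cot_two_mul hsin]
  ring_nf

/-- For `x = c / 2` with `c` odd the summand at `k = -c` is `1 / 0 = 0`, and the value comes from
`cot (π * c / 2) = 0`. -/
theorem hasSum_int_one_div_add_mul_two_mul_add_of_odd {c : ℤ} (hc : Odd c) (hx : 2 * x = c) :
    HasSum (fun k : ℤ ↦ 1 / ((x + k) * (2 * x + k))) (1 / x ^ 2) := by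
  have hx' : -x ∉ Set.range ((↑) : ℤ → ℝ) := by
    rintro ⟨k, hk⟩
    have : c = 2 * -k := by exact_mod_cast (by push_cast; linarith : (c : ℝ) = (2 * -k : ℤ))
    grind
  have hcot : Real.cot (π * -x) = 0 := by
    obtain ⟨d, rfl⟩ := hc
    have : Real.cos (π * x) = 0 := Real.cos_eq_zero_iff.mpr ⟨d, by push_cast at hx; grind⟩
    simp [Real.cot_eq_cos_div_sin, this]
  have h := (Equiv.addRight c).hasSum_iff.mpr (hasSum_int_one_div_add_mul hx')
  convert h using 1
  · ext k
    simp only [Function.comp_apply, Equiv.coe_addRight, Int.cast_add, ← hx]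
    ring
  · rw [hcot, mul_zero, zero_div, sub_zero, neg_sq]

end Cotangent

/-- The summand of Tornheim's series `∑ 1 / (a b (a + b))` at the half-integers `a = m + 1 / 2` and
`b = n + 1 / 2`, restricted to pairs that are congruent modulo `N`. At `a + b = 0` its value is
`1 / 0 = 0`. -/
noncomputable def halfTornheim (N : ℕ) (m n : ℤ) : ℝ :=
  if m ≡ n [ZMOD N] then 1 / (((m : ℝ) + 1 / 2) * (n + 1 / 2) * (m + n + 1)) else 0

/-- The closed form of the row sum `∑ n : ℤ, halfTornheim N m n` for `N ≠ 0`. -/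
noncomputable def halfTornheimRow (N : ℕ) (m : ℤ) : ℝ :=
  if (N : ℤ) ∣ 2 * m + 1 then 1 / ((m : ℝ) + 1 / 2) ^ 3
  else π / (N * ((m : ℝ) + 1 / 2) ^ 2 * Real.sin (π * (2 * m + 1) / N))

/-- The summand of the double series over pairs `p = (m, n)` with `m ≡ n` modulo `N`. -/
noncomputable def halfShiftTerm (N : ℕ) (p : ℕ × ℕ) : ℝ :=
  if p.1 % N = p.2 % N then
    1 / (((p.2 : ℝ) + 1 / 2) * ((p.1 : ℝ) + (p.2 : ℝ) + 1) ^ 2)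
  else 0

theorem mul_mul_le_add_pow_three {p q r : ℝ} (hp : 0 ≤ p) (hq : 0 ≤ q) (hr : 0 ≤ r) :
    p * q * r ≤ p ^ 3 + q ^ 3 + r ^ 3 := by
  have hpqr : 0 ≤ p * q * r := by positivity
  have hsq : 0 ≤ (p + q + r) * ((p - q) ^ 2 + (q - r) ^ 2 + (p - r) ^ 2) := by positivity
  linarith

theorem inv_mul_mul_le_rpow {x y z : ℝ} (hx : 0 ≤ x) (hy : 0 ≤ y) (hz : 0 ≤ z) :
    (x * y * z)⁻¹ ≤ x ^ (-(3 / 2) : ℝ) * y ^ (-(3 / 2) : ℝ) +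
      x ^ (-(3 / 2) : ℝ) * z ^ (-(3 / 2) : ℝ) + y ^ (-(3 / 2) : ℝ) * z ^ (-(3 / 2) : ℝ) := by
  have hinv {t : ℝ} (ht : 0 ≤ t) : t⁻¹ = (t ^ (-(1 / 2) : ℝ)) ^ 2 := by
    rw [← Real.rpow_mul_natCast ht]
    norm_num [Real.rpow_neg_one]
  have hcube {t : ℝ} (ht : 0 ≤ t) : t ^ (-(3 / 2) : ℝ) = (t ^ (-(1 / 2) : ℝ)) ^ 3 := by
    rw [← Real.rpow_mul_natCast ht]
    norm_num
  rw [mul_inv, mul_inv, hinv hx, hinv hy, hinv hz, hcube hx, hcube hy, hcube hz]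
  set u := x ^ (-(1 / 2) : ℝ)
  set v := y ^ (-(1 / 2) : ℝ)
  set w := z ^ (-(1 / 2) : ℝ)
  calc u ^ 2 * v ^ 2 * w ^ 2 = (u * v) * (u * w) * (v * w) := by ring
    _ ≤ (u * v) ^ 3 + (u * w) ^ 3 + (v * w) ^ 3 :=
      mul_mul_le_add_pow_three (by positivity) (by positivity) (by positivity)
    _ = u ^ 3 * v ^ 3 + u ^ 3 * w ^ 3 + v ^ 3 * w ^ 3 := by simp only [mul_pow]

theorem summable_int_int_inv_mul_mul (a b c : ℝ) :
    Summable fun p : ℤ × ℤ ↦ ((p.1 + a) * (p.2 + b) * (p.1 + p.2 + c))⁻¹ := by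
  let g (t : ℝ) (k : ℤ) : ℝ := |k + t| ^ (-(3 / 2) : ℝ)
  have hg (t : ℝ) : Summable (g t) := by
    simpa only [g, Real.rpow_neg (abs_nonneg _), ← one_div] using
      (Real.summable_one_div_int_add_rpow t (3 / 2)).mpr (by norm_num)
  have hprod (s t : ℝ) : Summable fun p : ℤ × ℤ ↦ g s p.1 * g t p.2 :=
    (hg s).mul_of_nonneg (hg t) (fun _ ↦ by positivity) (fun _ ↦ by positivity)
  have hfst : Summable fun p : ℤ × ℤ ↦ g a p.1 * g c (p.1 + p.2) :=
    (hprod a c).comp_injective (i := fun p : ℤ × ℤ ↦ (p.1, p.1 + p.2))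
      fun p q h ↦ by grind
  have hsnd : Summable fun p : ℤ × ℤ ↦ g b p.2 * g c (p.1 + p.2) :=
    (hprod b c).comp_injective (i := fun p : ℤ × ℤ ↦ (p.2, p.1 + p.2))
      fun p q h ↦ by grind
  refine .of_norm_bounded (((hprod a b).add hfst).add hsnd) fun p ↦ ?_
  simp only [norm_inv, norm_mul, Real.norm_eq_abs, g, Int.cast_add]
  exact inv_mul_mul_le_rpow (abs_nonneg _) (abs_nonneg _) (abs_nonneg _)

section HalfTornheim

variable {N : ℕ}

theorem halfTornheim_swap_neg (N : ℕ) (m n : ℤ) :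
    halfTornheim N n (-(m + 1)) = -halfTornheim N m (-(n + 1)) := by
  have hmod : n ≡ -(m + 1) [ZMOD N] ↔ m ≡ -(n + 1) [ZMOD N] := by
    rw [Int.modEq_comm, Int.modEq_iff_dvd, Int.modEq_iff_dvd, ← dvd_neg]
    ring_nf
  simp only [halfTornheim, hmod]
  split_ifs
  · push_cast
    rw [← one_div_neg_eq_neg_one_div]
    ring_nf
  · rw [neg_zero]

theorem summable_halfTornheim (N : ℕ) :
    Summable fun p : ℕ × ℤ ↦ halfTornheim N p.1 p.2 := by
  have h := (summable_int_int_inv_mul_mul (1 / 2) (1 / 2) 1).comp_injective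
    (i := fun p : ℕ × ℤ ↦ ((p.1 : ℤ), p.2)) (Nat.cast_injective.prodMap Function.injective_id)
  refine (h.indicator {p | (p.1 : ℤ) ≡ p.2 [ZMOD N]}).congr fun p ↦ ?_
  simp [halfTornheim, Set.indicator_apply]

/-- The columns congruent to `m` are `m + N k`; with `x = (m + 1 / 2) / N` the two factors that
depend on `k` are `N (x + k)` and `N (2 x + k)`. -/
theorem hasSum_halfTornheim_iff (hN : N ≠ 0) {m : ℤ} {s : ℝ} :
    HasSum (halfTornheim N m) s ↔
      HasSum (fun k : ℤ ↦ 1 / (((m : ℝ) + 1 / 2) * N ^ 2) *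
        (1 / ((((m : ℝ) + 1 / 2) / N + k) * (2 * (((m : ℝ) + 1 / 2) / N) + k)))) s := by
  have hinj : Function.Injective fun k : ℤ ↦ m + N * k := fun k l h ↦ by simpa [hN] using h
  have hterm (k : ℤ) : halfTornheim N m (m + N * k) = 1 / (((m : ℝ) + 1 / 2) * N ^ 2) *
      (1 / ((((m : ℝ) + 1 / 2) / N + k) * (2 * (((m : ℝ) + 1 / 2) / N) + k))) := by
    rw [halfTornheim, if_pos (by simp [Int.modEq_iff_dvd]), one_div_mul_one_div]
    congr 1
    push_cast
    field_simp
    ring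
  rw [← hinj.hasSum_iff]
  · simp only [Function.comp_def, hterm]
  · intro n hn
    refine if_neg fun h ↦ hn ?_
    obtain ⟨k, hk⟩ := Int.modEq_iff_add_fac.mp h
    exact ⟨k, hk.symm⟩

theorem hasSum_halfTornheim_row (hN : N ≠ 0) (m : ℤ) :
    HasSum (halfTornheim N m) (halfTornheimRow N m) := by
  have hN' : (N : ℝ) ≠ 0 := Nat.cast_ne_zero.mpr hN
  have htwo : 2 * (((m : ℝ) + 1 / 2) / N) = (2 * m + 1 : ℤ) / N := by push_cast; ring
  rw [hasSum_halfTornheim_iff hN, halfTornheimRow]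
  split_ifs with hdvd
  · obtain ⟨c, hc⟩ := hdvd
    have hodd : Odd c := Int.Odd.of_mul_right (hc ▸ odd_two_mul_add_one m)
    have hx : 2 * (((m : ℝ) + 1 / 2) / N) = c := by
      rw [htwo, hc, Int.cast_mul, Int.cast_natCast, mul_div_cancel_left₀ _ hN']
    convert! (hasSum_int_one_div_add_mul_two_mul_add_of_odd hodd hx).mul_left _ using 1
    field_simp
  · have hx : 2 * (((m : ℝ) + 1 / 2) / N) ∉ Set.range ((↑) : ℤ → ℝ) := by
      rintro ⟨k, hk⟩
      rw [htwo, eq_div_iff hN', mul_comm] at hk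
      exact hdvd ⟨k, by exact_mod_cast hk.symm⟩
    have hangle : π * (2 * m + 1) / N = 2 * π * (((m : ℝ) + 1 / 2) / N) := by ring
    convert! (hasSum_int_one_div_add_mul_two_mul_add hx).mul_left _ using 1
    rw [hangle]
    field_simp

theorem hasSum_halfTornheim_nat (hN : N ≠ 0) :
    HasSum (fun p : ℕ × ℕ ↦ halfTornheim N p.1 p.2) (∑' m : ℕ, halfTornheimRow N m) := by
  have h := (summable_halfTornheim N).hasSum
  rw [← (h.prod_fiberwise fun m ↦ hasSum_halfTornheim_row hN m).tsum_eq] at h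
  exact hasSum_nat_nat_of_antisymm (f := fun p ↦ halfTornheim N p.1 p.2) h
    fun m n ↦ halfTornheim_swap_neg N m n

theorem halfShiftTerm_add_swap (N : ℕ) (p : ℕ × ℕ) :
    halfShiftTerm N p + halfShiftTerm N p.swap = halfTornheim N p.1 p.2 := by
  obtain ⟨m, n⟩ := p
  simp only [halfShiftTerm, halfTornheim, Prod.swap, Int.natCast_modEq_iff, Nat.ModEq,
    eq_comm (a := n % N)]
  split_ifs
  · have hsum : (n : ℝ) + m + 1 = m + n + 1 := by ring
    push_cast
    rw [hsum]
    field_simp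
    ring
  · rw [add_zero]

theorem hasSum_halfShiftTerm (hN : N ≠ 0) :
    HasSum (halfShiftTerm N) ((∑' m : ℕ, halfTornheimRow N m) / 2) := by
  refine hasSum_half_of_hasSum_add_swap (fun p ↦ ?_) ?_
  · rw [halfShiftTerm]
    split_ifs <;> positivity
  · simpa only [halfShiftTerm_add_swap] using hasSum_halfTornheim_nat hN

end HalfTornheim

theorem hasSum_tsum_succ {G : Type*} [AddCommGroup G] [TopologicalSpace G] [IsTopologicalAddGroup G]
    [T2Space G] {f : ℕ → G} (hf : Summable f) (h0 : f 0 = 0) : HasSum f (∑' n, f (n + 1)) := by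
  simpa [hf.tsum_eq_zero_add, h0] using hf.hasSum

theorem hasSum_ite_dvd_odd_one_div_pow {d k : ℕ} (hd : Odd d) (hk : 1 < k) :
    HasSum (fun n : ℕ ↦ if d ∣ 2 * n + 1 then 1 / ((2 * n + 1 : ℕ) : ℝ) ^ k else 0)
      ((1 - 1 / 2 ^ k) * (1 / d ^ k * ∑' n : ℕ, 1 / ((n : ℝ) + 1) ^ k)) := by
  have hzeta : HasSum (fun n : ℕ ↦ 1 / (n : ℝ) ^ k) (∑' n : ℕ, 1 / ((n : ℝ) + 1) ^ k) := by
    simpa only [Nat.cast_add_one] using hasSum_tsum_succ (Real.summable_one_div_nat_pow.mpr hk)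
      (by simp [(zero_lt_one.trans hk).ne'])
  have hdvd : HasSum (fun n : ℕ ↦ if d ∣ n then 1 / (n : ℝ) ^ k else 0)
      (1 / d ^ k * ∑' n : ℕ, 1 / ((n : ℝ) + 1) ^ k) := by
    rw [hasSum_ite_dvd_iff hd.pos.ne']
    refine (hzeta.mul_left _).congr_fun fun n ↦ ?_
    rw [one_div_mul_one_div, Nat.cast_mul, mul_pow]
  have hmul (n : ℕ) : (if d ∣ 2 * n then 1 / ((2 * n : ℕ) : ℝ) ^ k else 0) =
      1 / 2 ^ k * if d ∣ n then 1 / (n : ℝ) ^ k else 0 := by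
    simp only [(Nat.coprime_two_right.mpr hd).dvd_mul_left, mul_ite, mul_zero, one_div_mul_one_div,
      Nat.cast_mul, mul_pow, Nat.cast_ofNat]
  simpa only using hasSum_odd_of_map_two_mul hdvd hmul

theorem chi3_two_mul (n : ℕ) : chi3 (2 * n) = -chi3 n := by
  unfold chi3
  grind

theorem abs_chi3_le_one (n : ℕ) : |chi3 n| ≤ 1 := by
  unfold chi3
  split_ifs <;> simp

theorem chi3_eq_zero_of_dvd {n : ℕ} (hn : 3 ∣ n) : chi3 n = 0 := by
  unfold chi3
  grind

theorem chi3_sq_of_not_dvd {n : ℕ} (hn : ¬3 ∣ n) : chi3 n ^ 2 = 1 := by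
  unfold chi3
  grind

theorem hasSum_chi3_odd_div_pow {k : ℕ} (hk : 1 < k) :
    HasSum (fun n : ℕ ↦ chi3 (2 * n + 1) / ((2 * n + 1 : ℕ) : ℝ) ^ k)
      ((1 + 1 / 2 ^ k) * ∑' n : ℕ, chi3 (n + 1) / ((n : ℝ) + 1) ^ k) := by
  have hsummable : Summable fun n : ℕ ↦ chi3 n / (n : ℝ) ^ k := by
    refine .of_norm_bounded (Real.summable_one_div_nat_pow.mpr hk) fun n ↦ ?_
    rw [norm_div, norm_pow, RCLike.norm_natCast]
    gcongr
    exact abs_chi3_le_one n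
  have hL : HasSum (fun n : ℕ ↦ chi3 n / (n : ℝ) ^ k)
      (∑' n : ℕ, chi3 (n + 1) / ((n : ℝ) + 1) ^ k) := by
    simpa only [Nat.cast_add_one] using hasSum_tsum_succ hsummable (by simp [chi3])
  rw [← sub_neg_eq_add]
  refine hasSum_odd_of_map_two_mul hL fun n ↦ ?_
  rw [chi3_two_mul, Nat.cast_mul, mul_pow, Nat.cast_ofNat]
  ring

theorem sin_pi_mul_odd_div_three (n : ℕ) :
    Real.sin (π * (2 * n + 1) / 3) = chi3 (2 * n + 1) * (√3 / 2) := by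
  obtain ⟨q, r, hr, rfl⟩ : ∃ q r : ℕ, r < 3 ∧ n = r + 3 * q :=
    ⟨n / 3, n % 3, Nat.mod_lt _ (by norm_num), (Nat.mod_add_div n 3).symm⟩
  have hangle : π * (2 * (r + 3 * q : ℕ) + 1) / 3 = π * (2 * r + 1) / 3 + q * (2 * π) := by
    push_cast
    ring
  have hchi : chi3 (2 * (r + 3 * q) + 1) = chi3 (2 * r + 1) := by
    unfold chi3
    grind
  rw [hangle, Real.sin_add_nat_mul_two_pi, hchi]
  interval_cases r
  · simp [chi3]
  · rw [show π * (2 * (1 : ℕ) + 1) / 3 = π by push_cast; ring, Real.sin_pi]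
    simp [chi3]
  · rw [show π * (2 * (2 : ℕ) + 1) / 3 = 2 * π - π / 3 by push_cast; ring, Real.sin_two_pi_sub,
      Real.sin_pi_div_three]
    simp [chi3]

theorem halfTornheimRow_three (n : ℕ) :
    halfTornheimRow 3 n = 8 * (if 3 ∣ 2 * n + 1 then 1 / ((2 * n + 1 : ℕ) : ℝ) ^ 3 else 0) +
      8 * π / (3 * √3) * (chi3 (2 * n + 1) / ((2 * n + 1 : ℕ) : ℝ) ^ 2) := by
  have hdvd : (3 : ℤ) ∣ 2 * n + 1 ↔ 3 ∣ 2 * n + 1 := by omega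
  have hhalf : (n : ℝ) + 1 / 2 = (2 * n + 1) / 2 := by ring
  simp only [halfTornheimRow, Nat.cast_ofNat, hdvd, Int.cast_natCast, sin_pi_mul_odd_div_three,
    hhalf]
  push_cast
  split_ifs with h
  · rw [chi3_eq_zero_of_dvd h]
    field_simp
    ring
  · have hsq := chi3_sq_of_not_dvd h
    have hne : chi3 (2 * n + 1) ≠ 0 := by grind
    field_simp
    linear_combination -8 * π * hsq

theorem hasSum_halfTornheimRow_three :
    HasSum (fun n : ℕ ↦ halfTornheimRow 3 n)
      (7 / 27 * (∑' n : ℕ, 1 / ((n : ℝ) + 1) ^ 3) +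
        10 * π / (3 * √3) * ∑' n : ℕ, chi3 (n + 1) / ((n : ℝ) + 1) ^ 2) := by
  simp only [halfTornheimRow_three]
  have hcubes := hasSum_ite_dvd_odd_one_div_pow (by decide : Odd 3) (by norm_num : 1 < 3)
  have hsquares := hasSum_chi3_odd_div_pow one_lt_two
  convert! (hcubes.mul_left 8).add (hsquares.mul_left (8 * π / (3 * √3))) using 1
  push_cast
  ring

theorem double_series_half_shift_mod_three :
    Summable (fun p : ℕ × ℕ =>
        if p.1 % 3 = p.2 % 3 then
          1 / (((p.2 : ℝ) + 1 / 2) * ((p.1 : ℝ) + (p.2 : ℝ) + 1) ^ 2)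
        else 0) ∧
      (∑' p : ℕ × ℕ,
          if p.1 % 3 = p.2 % 3 then
            1 / (((p.2 : ℝ) + 1 / 2) * ((p.1 : ℝ) + (p.2 : ℝ) + 1) ^ 2)
          else 0)
        = (7 / 54) * (∑' n : ℕ, 1 / ((n : ℝ) + 1) ^ 3)
          + (5 * π / (3 * Real.sqrt 3)) * ∑' n : ℕ, chi3 (n + 1) / ((n : ℝ) + 1) ^ 2 := by
  have h := hasSum_halfShiftTerm three_ne_zero
  rw [hasSum_halfTornheimRow_three.tsum_eq] at h
  refine ⟨h.summable, h.tsum_eq.trans ?_⟩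
  ring
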